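/- arXiv:2512.01623 — 4 statements merged into one kernel-verified Lean document; each statement's English description precedes it below -/
import Mathlib

section
/- Suppose p is a ρ-squared-distance-bound function and there exists L > 0 such that for every x ∈ C the map y ↦ f(x, y) is L-Lipschitz on U(x). Let ε₁ > 0 and set γ* := L²ρ/(4ε₁). Then for every γ ≥ γ*, any global solution (x*, y*) of BP is an ε₁-global-minimum of BP_{γp}; that is, x* ∈ C, y* ∈ U(x*), and f(x*, y*) + γ·p(x*, y*) ≤ f(x, y) + γ·p(x, y) + ε₁ for all x ∈ C and y ∈ U(x). -/
open Metric Set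

/-!
Leaving `S x` for a point at distance `d` lowers `f x` by at most `L * d`, and
`L * d ≤ (L * d) ^ 2 / (4 * ε) + ε`. The quadratic term is absorbed by the penalty as soon as
`γ ≥ L ^ 2 * ρ / (4 * ε)`, so the penalized objective undercuts the bilevel optimum by at most `ε`.
-/

section PointwiseBounds

variable {Y : Type*} [PseudoMetricSpace Y]

theorem le_add_mul_infDist_of_lipschitzOnWith {K : NNReal} {g : Y → ℝ} {s t : Set Y}
    (hg : LipschitzOnWith K g t) (hst : s ⊆ t) (hs : s.Nonempty) {m : ℝ}
    (hm : ∀ z ∈ s, m ≤ g z) {y : Y} (hy : y ∈ t) :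
    m ≤ g y + K * infDist y s := by
  have : Nonempty s := hs.to_subtype
  rw [infDist_eq_iInf, Real.mul_iInf_of_nonneg K.coe_nonneg, ← sub_le_iff_le_add']
  refine le_ciInf fun z => sub_le_iff_le_add'.2 ?_
  calc
    m ≤ g z := hm z z.2
    _ ≤ g y + K * dist (z : Y) y := hg.le_add_mul (hst z.2) hy
    _ = g y + K * dist y z := by rw [dist_comm]

theorem le_sq_div_four_mul_add {ε : ℝ} (hε : 0 < ε) (t : ℝ) : t ≤ t ^ 2 / (4 * ε) + ε := by
  have gap_eq : t ^ 2 / (4 * ε) + ε - t = (t - 2 * ε) ^ 2 / (4 * ε) := by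
    field_simp
    ring
  have gap_nonneg : 0 ≤ (t - 2 * ε) ^ 2 / (4 * ε) := by positivity
  linarith

theorem mul_le_penalty_add {L ρ ε γ d q : ℝ} (hρ : 0 < ρ) (hε : 0 < ε)
    (hγ : L ^ 2 * ρ / (4 * ε) ≤ γ) (hd : d ^ 2 ≤ ρ * q) :
    L * d ≤ γ * q + ε := by
  have hq : 0 ≤ q := nonneg_of_mul_nonneg_right ((sq_nonneg d).trans hd) hρ
  calc
    L * d ≤ (L * d) ^ 2 / (4 * ε) + ε := le_sq_div_four_mul_add hε _
    _ = L ^ 2 * d ^ 2 / (4 * ε) + ε := by rw [mul_pow]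
    _ ≤ L ^ 2 * (ρ * q) / (4 * ε) + ε := by gcongr
    _ = L ^ 2 * ρ / (4 * ε) * q + ε := by ring
    _ ≤ γ * q + ε := by gcongr

theorem le_add_penalty_add_of_lipschitzOnWith {K : NNReal} {g : Y → ℝ} {s t : Set Y}
    (hg : LipschitzOnWith K g t) (hst : s ⊆ t) (hs : s.Nonempty) {ρ ε γ q : ℝ}
    (hρ : 0 < ρ) (hε : 0 < ε) (hγ : (K : ℝ) ^ 2 * ρ / (4 * ε) ≤ γ) {m : ℝ}
    (hm : ∀ z ∈ s, m ≤ g z) {y : Y} (hy : y ∈ t) (hq : infDist y s ^ 2 ≤ ρ * q) :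
    m ≤ g y + γ * q + ε :=
  calc
    m ≤ g y + K * infDist y s := le_add_mul_infDist_of_lipschitzOnWith hg hst hs hm hy
    _ ≤ g y + (γ * q + ε) := by gcongr; exact mul_le_penalty_add hρ hε hγ hq
    _ = g y + γ * q + ε := (add_assoc _ _ _).symm

end PointwiseBounds

theorem penalized_bilevel_global_solutions_general {X Y : Type*} [PseudoMetricSpace Y]
    {C : Set X} {U S : X → Set Y} {f p : X → Y → ℝ}
    (hSU : ∀ x ∈ C, S x ⊆ U x) (hSne : ∀ x ∈ C, (S x).Nonempty)
    {ρ : ℝ} (hρ : 0 < ρ) (hp : ∀ x ∈ C, ∀ y ∈ U x, infDist y (S x) ^ 2 ≤ ρ * p x y)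
    (hp_zero : ∀ x ∈ C, ∀ y ∈ S x, p x y = 0)
    {K : NNReal} (hLip : ∀ x ∈ C, LipschitzOnWith K (f x) (U x))
    {ε γ : ℝ} (hε : 0 < ε) (hγ : (K : ℝ) ^ 2 * ρ / (4 * ε) ≤ γ)
    {xs : X} {ys : Y} (hxs : xs ∈ C) (hys : ys ∈ S xs)
    (hglob : ∀ x ∈ C, ∀ y ∈ S x, f xs ys ≤ f x y) :
    ys ∈ U xs ∧
      ∀ x ∈ C, ∀ y ∈ U x, f xs ys + γ * p xs ys ≤ f x y + γ * p x y + ε := by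
  refine ⟨hSU xs hxs hys, fun x hx y hy => ?_⟩
  rw [hp_zero xs hxs ys hys, mul_zero, add_zero]
  exact le_add_penalty_add_of_lipschitzOnWith (hLip x hx) (hSU x hx) (hSne x hx) hρ hε hγ
    (hglob x hx) hy (hp x hx y hy)

/-- Global-solution relation between the bilevel problem `BP` and its
penalized version `BP_{γp}` (Theorem "General Relation on Global Solutions", first part). -/
theorem penalized_bilevel_global_solutions
    {dx dy : ℕ}
    (C : Set (EuclideanSpace ℝ (Fin dx)))
    (U S : EuclideanSpace ℝ (Fin dx) → Set (EuclideanSpace ℝ (Fin dy)))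
    (f h p : EuclideanSpace ℝ (Fin dx) → EuclideanSpace ℝ (Fin dy) → ℝ)
    (hCne : C.Nonempty) (hCcl : IsClosed C)
    (hUne : ∀ x ∈ C, (U x).Nonempty) (hUcl : ∀ x ∈ C, IsClosed (U x))
    -- the lower-level solution set is the argmin of `h(x, ·)` over `U x`
    (hS : ∀ x ∈ C, S x = {y | y ∈ U x ∧ ∀ y' ∈ U x, h x y ≤ h x y'})
    (hSne : ∀ x ∈ C, (S x).Nonempty) (hScl : ∀ x ∈ C, IsClosed (S x))
    -- `p` is a ρ-squared-distance-bound function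
    (ρ : ℝ) (hρ : 0 < ρ)
    (hp : ∀ x ∈ C, ∀ y ∈ U x,
      0 ≤ p x y ∧ (infDist y (S x)) ^ 2 ≤ ρ * p x y ∧
        (p x y = 0 ↔ infDist y (S x) = 0))
    -- `f(x, ·)` is L-Lipschitz on `U x` for every `x ∈ C`
    (L : ℝ) (hL : 0 < L)
    (hLip : ∀ x ∈ C, LipschitzOnWith (Real.toNNReal L) (f x) (U x))
    (ε₁ : ℝ) (hε₁ : 0 < ε₁)
    (γ : ℝ) (hγ : L ^ 2 * ρ / (4 * ε₁) ≤ γ)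
    -- `(xs, ys)` is a global solution of `BP`
    (xs : EuclideanSpace ℝ (Fin dx)) (ys : EuclideanSpace ℝ (Fin dy))
    (hxs : xs ∈ C) (hys : ys ∈ S xs)
    (hglob : ∀ x ∈ C, ∀ y ∈ S x, f xs ys ≤ f x y) :
    -- then `(xs, ys)` is an ε₁-global-minimum of `BP_{γp}`
    ys ∈ U xs ∧
      ∀ x ∈ C, ∀ y ∈ U x,
        f xs ys + γ * p xs ys ≤ f x y + γ * p x y + ε₁ := by
  have hSU : ∀ x ∈ C, S x ⊆ U x := fun x hx => hS x hx ▸ sep_subset _ _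
  exact penalized_bilevel_global_solutions_general hSU hSne hρ (fun x hx y hy => (hp x hx y hy).2.1)
    (fun x hx y hy => (hp x hx y (hSU x hx hy)).2.2.2 (infDist_zero_of_mem hy)) hLip hε₁
    (by rwa [Real.coe_toNNReal L hL.le]) hxs hys hglob
end

section
/- Suppose p is a ρ-squared-distance-bound function and p(x, ·) is continuous for every x ∈ C. Let γ > 0 and suppose (x_γ, y_γ) is a local solution of BP_{γp} on the ball of radius r > 0: x_γ ∈ C, y_γ ∈ U(x_γ), and f(x_γ, y_γ) + γ·p(x_γ, y_γ) ≤ f(x, y) + γ·p(x, y) for all x ∈ C, y ∈ U(x) with ‖(x, y) − (x_γ, y_γ)‖ ≤ r. Suppose y ↦ f(x_γ, y) is L-Lipschitz on the ball of radius r around y_γ, and that there exist ε ≥ 0 and ȳ ∈ U(x_γ) with ‖ȳ − y_γ‖ ≤ r and p(x_γ, ȳ) ≤ ε. Then, setting ε̄_γ := L²ρ/γ² + 2ε, there exists ε_γ ∈ [0, ε̄_γ] such that (x_γ, y_γ) is a local solution of BP_{ε_γ}: p(x_γ, y_γ) ≤ ε_γ and there exists r' > 0 with f(x_γ, y_γ)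 ≤ f(x, y) for all x ∈ C, y ∈ U(x) satisfying p(x, y) ≤ ε_γ and ‖(x, y) − (x_γ, y_γ)‖ ≤ r'. -/
open Metric Set

/-!
Take `ε_γ = p(x_γ, y_γ)`. Among the points whose penalty is at most this value, the penalty term
cannot compensate for a decrease of `f`, so local minimality of `f + γp` passes to `f`.

To bound `p(x_γ, y_γ)`, write `d` for the distance from `y_γ` to `S(x_γ)` and compare `y_γ` with
points of penalty at most `ε` in the slice `x = x_γ`. Every `z ∈ S(x_γ)` gives
`γ p(x_γ, y_γ) ≤ L ‖z - y_γ‖ + γ ε`: directly if `z` lies in the ball of radius `r`, and otherwise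
because `ȳ` satisfies this inequality and is closer to `y_γ` than `z`. Taking the infimum over `z`
gives `p(x_γ, y_γ) ≤ (L / γ) d + ε`, and `d² ≤ ρ p(x_γ, y_γ)` together with AM-GM absorbs half
of `p(x_γ, y_γ)` into the left-hand side.
-/

theorem le_sq_mul_div_sq_add_two_mul_of_sq_le {R : Type*} [Field R] [LinearOrder R]
    [IsStrictOrderedRing R] {L d ε γ ρ q : R} (hρ : 0 ≤ ρ) (hγ : 0 < γ) (hq : 0 ≤ q)
    (hd : d ^ 2 ≤ ρ * q) (hqd : γ * q ≤ L * d + γ * ε) :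
    q ≤ L ^ 2 * ρ / γ ^ 2 + 2 * ε := by
  have hq_le : q ≤ L / γ * d + ε :=
    calc q ≤ (L * d + γ * ε) / γ := (le_div_iff₀' hγ).2 hqd
      _ = L / γ * d + ε := by field_simp
  have hsq : (L / γ * d) ^ 2 ≤ L ^ 2 * ρ / γ ^ 2 * q :=
    calc (L / γ * d) ^ 2 = (L / γ) ^ 2 * d ^ 2 := mul_pow _ _ _
      _ ≤ (L / γ) ^ 2 * (ρ * q) := by gcongr
      _ = L ^ 2 * ρ / γ ^ 2 * q := by ring
  have amgm : 2 * (L / γ * d) ≤ L ^ 2 * ρ / γ ^ 2 + q :=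
    two_mul_le_add_of_sq_le_mul (by positivity) hq hsq
  linarith

theorem le_mul_infDist {Y : Type*} [PseudoMetricSpace Y] {S : Set Y} {y : Y} {c k : ℝ}
    (hS : S.Nonempty) (hk : 0 ≤ k) (h : ∀ z ∈ S, c ≤ k * dist y z) : c ≤ k * infDist y S := by
  have : Nonempty S := hS.to_subtype
  rw [infDist_eq_iInf, Real.mul_iInf_of_nonneg hk]
  exact le_ciInf fun z => h z z.2

theorem isMinOn_inter_sublevel_of_isMinOn_add_mul {α R : Type*} [Ring R] [PartialOrder R]
    [IsOrderedRing R] {f p : α → R} {s : Set α} {a : α} {γ : R} (hγ : 0 ≤ γ)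
    (hmin : IsMinOn (fun z => f z + γ * p z) s a) :
    IsMinOn f (s ∩ {z | p z ≤ p a}) a := by
  rintro z ⟨hzs, hpz⟩
  have hle : f a + γ * p a ≤ f z + γ * p a :=
    (hmin hzs).trans (add_le_add_right (mul_le_mul_of_nonneg_left hpz hγ) _)
  exact le_of_add_le_add_right hle

section PenaltyBound

variable {Y : Type*} [PseudoMetricSpace Y] {T S : Set Y} {g q : Y → ℝ} {y₀ ybar : Y}
  {γ ε r : ℝ} {K : NNReal}

theorem mul_penalty_le_mul_dist_add
    (hmin : IsMinOn (fun y => g y + γ * q y) (T ∩ closedBall y₀ r) y₀)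
    (hg : LipschitzOnWith K g (closedBall y₀ r)) {z : Y} (hzT : z ∈ T)
    (hz : z ∈ closedBall y₀ r) : γ * q y₀ ≤ K * dist y₀ z + γ * q z := by
  have hopt : g y₀ + γ * q y₀ ≤ g z + γ * q z := hmin ⟨hzT, hz⟩
  have hy₀ : y₀ ∈ closedBall y₀ r := mem_closedBall_self (dist_nonneg.trans hz)
  have hlip : g z ≤ g y₀ + K * dist z y₀ := hg.le_add_mul hz hy₀
  rw [dist_comm] at hlip
  linarith

theorem mul_penalty_le_mul_infDist_add (hγ : 0 ≤ γ)
    (hmin : IsMinOn (fun y => g y + γ * q y) (T ∩ closedBall y₀ r) y₀)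
    (hg : LipschitzOnWith K g (closedBall y₀ r))
    (hSne : S.Nonempty) (hST : S ⊆ T) (hSq : ∀ y ∈ S, q y ≤ ε)
    (hybarT : ybar ∈ T) (hybar : ybar ∈ closedBall y₀ r) (hybarq : q ybar ≤ ε) :
    γ * q y₀ ≤ K * infDist y₀ S + γ * ε := by
  have near : ∀ z ∈ T, z ∈ closedBall y₀ r → q z ≤ ε → γ * q y₀ ≤ K * dist y₀ z + γ * ε :=
    fun z hzT hz hqz => (mul_penalty_le_mul_dist_add hmin hg hzT hz).trans (by gcongr)
  rw [← sub_le_iff_le_add]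
  refine le_mul_infDist hSne K.coe_nonneg fun z hzS => ?_
  rw [sub_le_iff_le_add]
  by_cases hz : z ∈ closedBall y₀ r
  · exact near z (hST hzS) hz (hSq z hzS)
  · have hcloser : dist y₀ ybar ≤ dist y₀ z :=
      (mem_closedBall'.1 hybar).trans (not_le.1 (mt mem_closedBall'.2 hz)).le
    exact (near ybar hybarT hybar hybarq).trans (by gcongr)

end PenaltyBound

/-- The constraint set `x ∈ C`, `y ∈ U(x)` of the penalized problem `BP_{γp}`, as a set of pairs.
Intersecting it with a sublevel set of `p` gives the constraint set of `BP_ε`. -/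
def bilevelFeasibleSet {X Y : Type*} (C : Set X) (U : X → Set Y) : Set (X × Y) :=
  {z | z.1 ∈ C ∧ z.2 ∈ U z.1}

theorem isMinOn_slice_of_isMinOn_bilevelFeasibleSet {X Y β : Type*} [PseudoMetricSpace X]
    [PseudoMetricSpace Y] [Preorder β] {C : Set X} {U : X → Set Y} {F : X × Y → β} {x₀ : X}
    {y₀ : Y} {r : ℝ} (hx₀ : x₀ ∈ C)
    (hmin : IsMinOn F (bilevelFeasibleSet C U ∩ closedBall (x₀, y₀) r) (x₀, y₀)) :
    IsMinOn (fun y => F (x₀, y)) (U x₀ ∩ closedBall y₀ r) y₀ := by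
  rintro y ⟨hyU, hy⟩
  have hball : (x₀, y) ∈ closedBall (x₀, y₀) r := by
    rwa [mem_closedBall, dist_prod_same_left]
  exact hmin ⟨⟨hx₀, hyU⟩, hball⟩

theorem penalized_bilevel_local_solutions_case_i_general {X Y : Type*} [PseudoMetricSpace X]
    [PseudoMetricSpace Y] {C : Set X} {U : X → Set Y} {S : Set Y} {f p : X × Y → ℝ}
    {x₀ : X} {y₀ ybar : Y} {ρ γ r ε : ℝ} {K : NNReal} (hρ : 0 < ρ) (hγ : 0 < γ) (hx₀ : x₀ ∈ C)
    (hmin : IsMinOn (fun z => f z + γ * p z)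
      (bilevelFeasibleSet C U ∩ closedBall (x₀, y₀) r) (x₀, y₀))
    (hf : LipschitzOnWith K (fun y => f (x₀, y)) (closedBall y₀ r))
    (hSne : S.Nonempty) (hSU : S ⊆ U x₀) (hSp : ∀ y ∈ S, p (x₀, y) ≤ ε)
    (hdist : infDist y₀ S ^ 2 ≤ ρ * p (x₀, y₀))
    (hybarU : ybar ∈ U x₀) (hybar : ybar ∈ closedBall y₀ r) (hybarp : p (x₀, ybar) ≤ ε) :
    p (x₀, y₀) ∈ Icc 0 (K ^ 2 * ρ / γ ^ 2 + 2 * ε) ∧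
      IsMinOn f (bilevelFeasibleSet C U ∩ closedBall (x₀, y₀) r ∩ {z | p z ≤ p (x₀, y₀)})
        (x₀, y₀) := by
  have hp : 0 ≤ p (x₀, y₀) := nonneg_of_mul_nonneg_right ((sq_nonneg _).trans hdist) hρ
  have hpen : γ * p (x₀, y₀) ≤ K * infDist y₀ S + γ * ε :=
    mul_penalty_le_mul_infDist_add (q := fun y => p (x₀, y)) hγ.le
      (isMinOn_slice_of_isMinOn_bilevelFeasibleSet hx₀ hmin) hf hSne hSU hSp hybarU hybar hybarp
  exact ⟨⟨hp, le_sq_mul_div_sq_add_two_mul_of_sq_le hρ.le hγ hp hdist hpen⟩,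
    isMinOn_inter_sublevel_of_isMinOn_add_mul hγ.le hmin⟩

/-- Local-solution relation (case (i)): a local solution of the penalized
problem `BP_{γp}` is a local solution of the approximate problem `BP_{ε_γ}` with
`ε_γ ≤ L²ρ/γ² + 2ε`, given a nearby point `ȳ ∈ U(x_γ)` with small penalty value. -/
theorem penalized_bilevel_local_solutions_case_i
    {dx dy : ℕ}
    (C : Set (EuclideanSpace ℝ (Fin dx)))
    (U S : EuclideanSpace ℝ (Fin dx) → Set (EuclideanSpace ℝ (Fin dy)))
    (f h p : EuclideanSpace ℝ (Fin dx) → EuclideanSpace ℝ (Fin dy) → ℝ)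
    (hCne : C.Nonempty) (hCcl : IsClosed C)
    (hUne : ∀ x ∈ C, (U x).Nonempty) (hUcl : ∀ x ∈ C, IsClosed (U x))
    -- the lower-level solution set is the argmin of `h(x, ·)` over `U x`
    (hS : ∀ x ∈ C, S x = {y | y ∈ U x ∧ ∀ y' ∈ U x, h x y ≤ h x y'})
    (hSne : ∀ x ∈ C, (S x).Nonempty) (hScl : ∀ x ∈ C, IsClosed (S x))
    -- `p` is a ρ-squared-distance-bound function with `p(x, ·)` continuous
    (ρ : ℝ) (hρ : 0 < ρ)
    (hp : ∀ x ∈ C, ∀ y ∈ U x,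
      0 ≤ p x y ∧ (infDist y (S x)) ^ 2 ≤ ρ * p x y ∧
        (p x y = 0 ↔ infDist y (S x) = 0))
    (hpc : ∀ x ∈ C, Continuous (p x))
    (γ : ℝ) (hγ : 0 < γ)
    (r : ℝ) (hr : 0 < r)
    -- `(xγ, yγ)` is a local solution of `BP_{γp}` on the ball of radius `r`
    (xγ : EuclideanSpace ℝ (Fin dx)) (yγ : EuclideanSpace ℝ (Fin dy))
    (hxγ : xγ ∈ C) (hyγ : yγ ∈ U xγ)
    (hloc : ∀ x ∈ C, ∀ y ∈ U x,
      dist ((x, y) : EuclideanSpace ℝ (Fin dx) × EuclideanSpace ℝ (Fin dy)) (xγ, yγ) ≤ r →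
        f xγ yγ + γ * p xγ yγ ≤ f x y + γ * p x y)
    -- `f(xγ, ·)` is L-Lipschitz on the ball of radius `r` around `yγ`
    (L : ℝ) (hL : 0 < L)
    (hLip : LipschitzOnWith (Real.toNNReal L) (f xγ) (closedBall yγ r))
    -- case (i): there is `ȳ ∈ U(xγ)` near `yγ` with small penalty value
    (ε : ℝ) (hε : 0 ≤ ε)
    (ybar : EuclideanSpace ℝ (Fin dy)) (hybarU : ybar ∈ U xγ)
    (hybar_close : ‖ybar - yγ‖ ≤ r) (hybar_p : p xγ ybar ≤ ε) :
    -- then `(xγ, yγ)` is a local solution of `BP_{ε_γ}` with `ε_γ ≤ L²ρ/γ² + 2ε`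
    ∃ εγ : ℝ, 0 ≤ εγ ∧ εγ ≤ L ^ 2 * ρ / γ ^ 2 + 2 * ε ∧
      p xγ yγ ≤ εγ ∧
      ∃ r' : ℝ, 0 < r' ∧
        ∀ x ∈ C, ∀ y ∈ U x, p x y ≤ εγ →
          dist ((x, y) : EuclideanSpace ℝ (Fin dx) × EuclideanSpace ℝ (Fin dy)) (xγ, yγ) ≤ r' →
            f xγ yγ ≤ f x y := by
  have hSU : S xγ ⊆ U xγ := fun y hy => ((hS xγ hxγ).subset hy).1
  have hSp : ∀ y ∈ S xγ, p xγ y ≤ ε := fun y hy =>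
    ((hp xγ hxγ y (hSU hy)).2.2.2 (infDist_zero_of_mem hy)).trans_le hε
  obtain ⟨⟨hp_nonneg, hp_le⟩, hmin⟩ := penalized_bilevel_local_solutions_case_i_general
    (f := fun z => f z.1 z.2) (p := fun z => p z.1 z.2) hρ hγ hxγ
    (fun z hz => hloc z.1 hz.1.1 z.2 hz.1.2 hz.2) hLip (hSne xγ hxγ) hSU hSp
    (hp xγ hxγ yγ hyγ).2.1 hybarU (mem_closedBall_iff_norm.2 hybar_close) hybar_p
  rw [Real.coe_toNNReal L hL.le] at hp_le
  exact ⟨p xγ yγ, hp_nonneg, hp_le, le_rfl, r, hr,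
    fun x hx y hy hpy hxy => hmin (a := (x, y)) ⟨⟨⟨hx, hy⟩, hxy⟩, hpy⟩⟩
end

section
/- Suppose p is a ρ-squared-distance-bound function and p(x, ·) is continuous for every x ∈ C. Let γ > 0 and suppose (x_γ, y_γ) is a local solution of BP_{γp} on the ball of radius r > 0: x_γ ∈ C, y_γ ∈ U(x_γ), and f(x_γ, y_γ) + γ·p(x_γ, y_γ) ≤ f(x, y) + γ·p(x, y) for all x ∈ C, y ∈ U(x) with ‖(x, y) − (x_γ, y_γ)‖ ≤ r. Suppose y ↦ f(x_γ, y) is L-Lipschitz on the ball of radius r around y_γ, the set U(x_γ) is convex, and the function y ↦ p(x_γ, y) is convex. Then, setting ε̄_γ := L²ρ/γ², there exists ε_γ ∈ [0, ε̄_γ] such that (x_γ, y_γ) is a local solution of BP_{ε_γ}: p(x_γ, y_γ) ≤ ε_γ and there exists r' > 0 with f(x_γ, y_γ) ≤ f(x, y) for all x ∈ C, y ∈ U(x) satisfying p(x, y) ≤ ε_γ and ‖(x, y) − (x_γ, y_γ)‖ ≤ r'. -/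
open Metric Set

open scoped NNReal Topology

/-!
Take `ε_γ = p(x_γ, y_γ)`: on the sublevel set `p ≤ ε_γ` the penalty term cannot favour the
competitor, so a minimizer of `f + γ p` there minimizes `f`.

To bound `ε_γ`, fix `x_γ`. Replacing `f(x_γ, ·)` by its Lipschitz majorant
`f(x_γ, y_γ) + L ‖· - y_γ‖` keeps `y_γ` a local minimizer, but now of a convex function, hence a
global one. Comparing with the points of `S(x_γ)`, where `p` vanishes, gives
`γ ε_γ ≤ L d(y_γ, S(x_γ))`, and the squared-distance bound gives `d(y_γ, S(x_γ))² ≤ ρ ε_γ`.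
-/

theorem le_mul_infDist_of_forall_le_mul_dist {Y : Type*} [PseudoMetricSpace Y] {S : Set Y}
    {y : Y} {c : ℝ} {L : ℝ≥0} (hS : S.Nonempty) (hc : ∀ z ∈ S, c ≤ L * dist y z) :
    c ≤ L * infDist y S := by
  have : Nonempty S := hS.to_subtype
  rw [infDist_eq_iInf, Real.mul_iInf_of_nonneg L.coe_nonneg]
  exact le_ciInf fun z => hc z z.2

theorem le_sq_mul_div_sq_of_mul_le_mul_of_sq_le_mul {P d L ρ γ : ℝ} (hP : 0 ≤ P)
    (hρ : 0 ≤ ρ) (hγ : 0 < γ) (hlin : γ * P ≤ L * d) (hsq : d ^ 2 ≤ ρ * P) :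
    P ≤ L ^ 2 * ρ / γ ^ 2 := by
  rcases hP.eq_or_lt with rfl | hPpos
  · positivity
  rw [le_div_iff₀ (by positivity)]
  refine le_of_mul_le_mul_right ?_ hPpos
  calc P * γ ^ 2 * P = (γ * P) ^ 2 := by ring
    _ ≤ (L * d) ^ 2 := by gcongr
    _ = L ^ 2 * d ^ 2 := by ring
    _ ≤ L ^ 2 * (ρ * P) := by gcongr
    _ = L ^ 2 * ρ * P := by ring

/-- `q` is a `ρ`-squared-distance-bound function for the target set `S` on the domain `K`.
The bilevel notion asks this of every slice `q = p x`, with `S = S x` and `K = U x`, `x ∈ C`. -/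
def IsSqDistBoundOn {Y : Type*} [PseudoMetricSpace Y] (ρ : ℝ) (S K : Set Y) (q : Y → ℝ) : Prop :=
  ∀ y ∈ K, 0 ≤ q y ∧ infDist y S ^ 2 ≤ ρ * q y ∧ (q y = 0 ↔ infDist y S = 0)

section ConvexPenalty

variable {Y : Type*} [SeminormedAddCommGroup Y] [NormedSpace ℝ Y]
  {K S s : Set Y} {g q : Y → ℝ} {y : Y} {L : ℝ≥0} {ρ γ : ℝ}

theorem isMinOn_mul_dist_add_of_isLocalMinOn_add (hq : ConvexOn ℝ K q) (hy : y ∈ K)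
    (hs : s ∈ 𝓝[K] y) (hg : LipschitzOnWith L g s) (hmin : IsLocalMinOn (fun w => g w + q w) K y) :
    IsMinOn (fun w => L * dist w y + q w) K y := by
  have hconv : ConvexOn ℝ K (fun w => L * dist w y + q w) :=
    ((convexOn_dist y hq.1).smul L.coe_nonneg).add hq
  refine IsMinOn.of_isLocalMinOn_of_convexOn hy ?_ hconv
  filter_upwards [hmin, hs] with w hw hws
  have hgw : g w - g y ≤ L * dist w y :=
    (le_abs_self _).trans (hg.dist_le_mul w hws y (mem_of_mem_nhdsWithin hy hs))
  rw [dist_self]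
  linarith

theorem IsSqDistBoundOn.le_of_isLocalMinOn_add_mul (hbound : IsSqDistBoundOn ρ S K q)
    (hρ : 0 ≤ ρ) (hS : S.Nonempty) (hSK : S ⊆ K) (hq : ConvexOn ℝ K q) (hγ : 0 < γ) (hy : y ∈ K)
    (hs : s ∈ 𝓝[K] y) (hg : LipschitzOnWith L g s)
    (hmin : IsLocalMinOn (fun w => g w + γ * q w) K y) :
    q y ≤ L ^ 2 * ρ / γ ^ 2 := by
  have hglobal : IsMinOn (fun w => L * dist w y + γ * q w) K y :=
    isMinOn_mul_dist_add_of_isLocalMinOn_add (hq.smul hγ.le) hy hs hg hmin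
  have hlin : γ * q y ≤ L * infDist y S := by
    refine le_mul_infDist_of_forall_le_mul_dist hS fun z hz => ?_
    have hqz : q z = 0 := (hbound z (hSK hz)).2.2.2 (infDist_zero_of_mem hz)
    simpa [hqz, dist_comm] using hglobal (hSK hz)
  obtain ⟨hnonneg, hsq, -⟩ := hbound y hy
  exact le_sq_mul_div_sq_of_mul_le_mul_of_sq_le_mul hnonneg hρ hγ hlin hsq

end ConvexPenalty

theorem penalized_bilevel_local_solutions_case_ii_general
    {X Y : Type*} [PseudoMetricSpace X] [SeminormedAddCommGroup Y] [NormedSpace ℝ Y]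
    {C : Set X} {U : X → Set Y} {S : Set Y} {f p : X → Y → ℝ} {ρ γ r : ℝ} {L : ℝ≥0}
    {xγ : X} {yγ : Y} (hρ : 0 ≤ ρ) (hγ : 0 < γ) (hr : 0 < r)
    (hS : S.Nonempty) (hSU : S ⊆ U xγ) (hp : IsSqDistBoundOn ρ S (U xγ) (p xγ))
    (hxγ : xγ ∈ C) (hyγ : yγ ∈ U xγ)
    (hloc : ∀ x ∈ C, ∀ y ∈ U x, dist (x, y) (xγ, yγ) ≤ r →
      f xγ yγ + γ * p xγ yγ ≤ f x y + γ * p x y)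
    (hLip : LipschitzOnWith L (f xγ) (closedBall yγ r)) (hpconv : ConvexOn ℝ (U xγ) (p xγ)) :
    p xγ yγ ≤ L ^ 2 * ρ / γ ^ 2 ∧
      ∀ x ∈ C, ∀ y ∈ U x, p x y ≤ p xγ yγ → dist (x, y) (xγ, yγ) ≤ r → f xγ yγ ≤ f x y := by
  have hball : closedBall yγ r ∈ 𝓝[U xγ] yγ :=
    mem_nhdsWithin_of_mem_nhds (closedBall_mem_nhds yγ hr)
  have hslice : IsLocalMinOn (fun y => f xγ y + γ * p xγ y) (U xγ) yγ := by
    filter_upwards [self_mem_nhdsWithin, hball] with y hyU hyr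
    exact hloc xγ hxγ y hyU (by simpa [Prod.dist_eq, hr.le] using hyr)
  refine ⟨hp.le_of_isLocalMinOn_add_mul hρ hS hSU hpconv hγ hyγ hball hLip hslice,
    fun x hx y hy hpy hdist => le_of_add_le_add_right (a := γ * p xγ yγ) ?_⟩
  calc f xγ yγ + γ * p xγ yγ ≤ f x y + γ * p x y := hloc x hx y hy hdist
    _ ≤ f x y + γ * p xγ yγ := by gcongr

/-- Local-solution relation (case (ii)): a local solution of the penalized
problem `BP_{γp}` is a local solution of the approximate problem `BP_{ε_γ}` with
`ε_γ ≤ L²ρ/γ²`, given that `U(x_γ)` is convex and `p(x_γ, ·)` is convex. -/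
theorem penalized_bilevel_local_solutions_case_ii
    {dx dy : ℕ}
    (C : Set (EuclideanSpace ℝ (Fin dx)))
    (U S : EuclideanSpace ℝ (Fin dx) → Set (EuclideanSpace ℝ (Fin dy)))
    (f h p : EuclideanSpace ℝ (Fin dx) → EuclideanSpace ℝ (Fin dy) → ℝ)
    (hCne : C.Nonempty) (hCcl : IsClosed C)
    (hUne : ∀ x ∈ C, (U x).Nonempty) (hUcl : ∀ x ∈ C, IsClosed (U x))
    -- the lower-level solution set is the argmin of `h(x, ·)` over `U x`
    (hS : ∀ x ∈ C, S x = {y | y ∈ U x ∧ ∀ y' ∈ U x, h x y ≤ h x y'})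
    (hSne : ∀ x ∈ C, (S x).Nonempty) (hScl : ∀ x ∈ C, IsClosed (S x))
    -- `p` is a ρ-squared-distance-bound function with `p(x, ·)` continuous
    (ρ : ℝ) (hρ : 0 < ρ)
    (hp : ∀ x ∈ C, ∀ y ∈ U x,
      0 ≤ p x y ∧ (infDist y (S x)) ^ 2 ≤ ρ * p x y ∧
        (p x y = 0 ↔ infDist y (S x) = 0))
    (hpc : ∀ x ∈ C, Continuous (p x))
    (γ : ℝ) (hγ : 0 < γ)
    (r : ℝ) (hr : 0 < r)
    -- `(xγ, yγ)` is a local solution of `BP_{γp}` on the ball of radius `r`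
    (xγ : EuclideanSpace ℝ (Fin dx)) (yγ : EuclideanSpace ℝ (Fin dy))
    (hxγ : xγ ∈ C) (hyγ : yγ ∈ U xγ)
    (hloc : ∀ x ∈ C, ∀ y ∈ U x,
      dist ((x, y) : EuclideanSpace ℝ (Fin dx) × EuclideanSpace ℝ (Fin dy)) (xγ, yγ) ≤ r →
        f xγ yγ + γ * p xγ yγ ≤ f x y + γ * p x y)
    -- `f(xγ, ·)` is L-Lipschitz on the ball of radius `r` around `yγ`
    (L : ℝ) (hL : 0 < L)
    (hLip : LipschitzOnWith (Real.toNNReal L) (f xγ) (closedBall yγ r))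
    -- case (ii): `U(xγ)` is convex and `p(xγ, ·)` is convex
    (hUconv : Convex ℝ (U xγ))
    (hpconv : ConvexOn ℝ (U xγ) (p xγ)) :
    -- then `(xγ, yγ)` is a local solution of `BP_{ε_γ}` with `ε_γ ≤ L²ρ/γ²`
    ∃ εγ : ℝ, 0 ≤ εγ ∧ εγ ≤ L ^ 2 * ρ / γ ^ 2 ∧
      p xγ yγ ≤ εγ ∧
      ∃ r' : ℝ, 0 < r' ∧
        ∀ x ∈ C, ∀ y ∈ U x, p x y ≤ εγ →
          dist ((x, y) : EuclideanSpace ℝ (Fin dx) × EuclideanSpace ℝ (Fin dy)) (xγ, yγ) ≤ r' →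
            f xγ yγ ≤ f x y := by
  obtain ⟨hε, hmin⟩ := penalized_bilevel_local_solutions_case_ii_general hρ.le hγ hr
    (hSne xγ hxγ) ((hS xγ hxγ).trans_subset fun _ hy => hy.1) (hp xγ hxγ) hxγ hyγ hloc hLip hpconv
  exact ⟨p xγ yγ, (hp xγ hxγ yγ hyγ).1, by rwa [Real.coe_toNNReal L hL.le] at hε, le_rfl,
    r, hr, hmin⟩
end

section
/- Let (Ω, P) be a finite probability space and let g : [0,1] → [0,1] be a nondecreasing concave function with g(0) = 0. Then the distortion risk measure ρ_g is subadditive: for all nonnegative random variables Z₁ and Z₂ on Ω, ρ_g(Z₁ + Z₂) ≤ ρ_g(Z₁) + ρ_g(Z₂). -/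
open MeasureTheory

/-!
Concavity of `g` makes the set function `v A = g (P A)` submodular, and `ρ_g` is the Choquet
integral of `v`. Order the sample space so that `Z₁ + Z₂` is antitone, and give each point its
marginal contribution to `v` along this order. The resulting additive set function lies below `v`
by submodularity, and agrees with `v` on lower sets, in particular on the superlevel sets of
`Z₁ + Z₂`. So its Choquet integral, which is linear, equals `ρ_g` at `Z₁ + Z₂` and is at most
`ρ_g` at `Z₁` and at `Z₂`.
-/

theorem exists_linearOrder_antitone {α β : Type*} [LinearOrder β] (f : α → β) :
    ∃ _ : LinearOrder α, Antitone f := by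
  let _ : LinearOrder α := WellOrderingRel.isWellOrder.linearOrder
  have key_injective : Function.Injective fun a ↦ toLex (OrderDual.toDual (f a), a) :=
    fun _ _ h ↦ congrArg (fun x ↦ (ofLex x).2) h
  exact ⟨LinearOrder.lift' _ key_injective, fun _ _ h ↦ Prod.Lex.monotone_fst _ _ h⟩

section Submodular

/-- A submodular function on a lattice. On `Set Ω` this is submodularity of set functions, the
property that makes their Choquet integrals subadditive. -/
def IsSubmodular {α M : Type*} [Lattice α] [Add M] [LE M] (v : α → M) : Prop :=
  ∀ a b, v (a ⊔ b) + v (a ⊓ b) ≤ v a + v b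

theorem smul_add_smul_add_swap {𝕜 E : Type*} [Semiring 𝕜] [AddCommMonoid E] [Module 𝕜 E]
    {a b : 𝕜} (hab : a + b = 1) (x y : E) : (a • x + b • y) + (b • x + a • y) = x + y := by
  rw [add_add_add_comm, ← add_smul, ← add_smul, add_comm b a, hab, one_smul, one_smul]

theorem add_le_add_of_concaveOn_of_mem_segment {𝕜 E β : Type*} [Semiring 𝕜] [PartialOrder 𝕜]
    [AddCancelCommMonoid E] [Module 𝕜 E] [AddCommMonoid β] [PartialOrder β] [IsOrderedAddMonoid β]
    [Module 𝕜 β] {s : Set E} {f : E → β} (hf : ConcaveOn 𝕜 s f) {x y p q : E}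
    (hx : x ∈ s) (hy : y ∈ s) (hp : p ∈ segment 𝕜 x y) (hpq : p + q = x + y) :
    f x + f y ≤ f p + f q := by
  obtain ⟨a, b, ha, hb, hab, rfl⟩ := hp
  obtain rfl : q = b • x + a • y :=
    add_left_cancel (hpq.trans (smul_add_smul_add_swap hab x y).symm)
  calc f x + f y = (a • f x + b • f y) + (b • f x + a • f y) :=
        (smul_add_smul_add_swap hab (f x) (f y)).symm
    _ ≤ f (a • x + b • y) + f (b • x + a • y) :=
        add_le_add (hf.2 hx hy ha hb hab) (hf.2 hx hy hb ha (add_comm a b ▸ hab))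

theorem isSubmodular_comp_measureReal {Ω : Type*} [MeasurableSpace Ω]
    [DiscreteMeasurableSpace Ω] (P : Measure Ω) [IsFiniteMeasure P] {g : ℝ → ℝ}
    (hg : ConcaveOn ℝ (Set.Icc 0 (P.real Set.univ)) g) :
    IsSubmodular fun A : Set Ω ↦ g (P.real A) := by
  intro A B
  have mem_Icc (C : Set Ω) : P.real C ∈ Set.Icc 0 (P.real Set.univ) :=
    ⟨measureReal_nonneg, measureReal_mono C.subset_univ⟩
  have mem_segment : P.real A ∈ segment ℝ (P.real (A ∪ B)) (P.real (A ∩ B)) := by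
    rw [segment_symm, segment_eq_Icc
      (measureReal_mono (Set.inter_subset_left.trans Set.subset_union_left))]
    exact ⟨measureReal_mono Set.inter_subset_left, measureReal_mono Set.subset_union_left⟩
  exact add_le_add_of_concaveOn_of_mem_segment hg (mem_Icc _) (mem_Icc _) mem_segment
    (measureReal_union_add_inter .of_discrete).symm

end Submodular

section Marginal

variable {Ω M : Type*}

/-- The marginal contribution of `a` to the set function `v` when the points are added in
increasing order. For submodular `v` these are the weights of an additive set function below
`v`. -/
def marginal [Preorder Ω] [Sub M] (v : Set Ω → M) (a : Ω) : M :=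
  v (Set.Iic a) - v (Set.Iio a)

variable [LinearOrder Ω] [AddCommGroup M] {v : Set Ω → M}

theorem sum_marginal_of_isLowerSet (hv : v ∅ = 0) {A : Finset Ω} (hA : IsLowerSet (A : Set Ω)) :
    ∑ a ∈ A, marginal v a = v A := by
  induction A using Finset.induction_on_max with
  | empty => simp [hv]
  | insert a A hlt ih =>
    have ha : a ∉ A := fun h ↦ (hlt a h).false
    have hA_eq : (A : Set Ω) = Set.Iio a := by
      ext b
      refine ⟨hlt b, fun hba ↦ ?_⟩
      exact Finset.mem_of_mem_insert_of_ne (hA (le_of_lt hba) (by simp)) (ne_of_lt hba)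
    rw [Finset.sum_insert ha, ih (hA_eq ▸ isLowerSet_Iio a), Finset.coe_insert, hA_eq,
      Set.Iio_insert, marginal, sub_add_cancel]

theorem sum_marginal_le [PartialOrder M] [IsOrderedAddMonoid M] (hv : v ∅ = 0)
    (hsub : IsSubmodular v) (A : Finset Ω) : ∑ a ∈ A, marginal v a ≤ v A := by
  induction A using Finset.induction_on_max with
  | empty => simp [hv]
  | insert a A hlt ih =>
    have ha : a ∉ A := fun h ↦ (hlt a h).false
    have hsubset : (A : Set Ω) ⊆ Set.Iio a := hlt
    have hunion : insert a (A : Set Ω) ∪ Set.Iio a = Set.Iic a := by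
      rw [Set.insert_union, Set.union_eq_right.2 hsubset, Set.Iio_insert]
    have hinter : insert a (A : Set Ω) ∩ Set.Iio a = A := by
      rw [Set.insert_inter_of_notMem (by simp), Set.inter_eq_left.2 hsubset]
    have hmarginal : marginal v a + v A ≤ v (insert a A) := by
      have hsub_Iio : v (insert a A ∪ Set.Iio a) + v (insert a A ∩ Set.Iio a) ≤
          v (insert a A) + v (Set.Iio a) := hsub _ _
      rw [hunion, hinter] at hsub_Iio
      rwa [marginal, sub_add_eq_add_sub, sub_le_iff_le_add]
    rw [Finset.sum_insert ha, Finset.coe_insert]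
    exact (add_le_add_right ih _).trans hmarginal

variable [Fintype Ω]

theorem sum_indicator_marginal_of_isLowerSet (hv : v ∅ = 0) {A : Set Ω} (hA : IsLowerSet A) :
    ∑ a, A.indicator (marginal v) a = v A := by
  lift A to Finset Ω using A.toFinite
  rw [← sum_marginal_of_isLowerSet hv hA, Finset.sum_indicator_subset _ A.subset_univ]

theorem sum_indicator_marginal_superlevel {β : Type*} [Preorder β] (hv : v ∅ = 0) {Z : Ω → β}
    (hZ : Antitone Z) (z : β) :
    ∑ a, {ω | z < Z ω}.indicator (marginal v) a = v {ω | z < Z ω} :=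
  sum_indicator_marginal_of_isLowerSet hv fun _ _ hba ha ↦ lt_of_lt_of_le ha (hZ hba)

theorem sum_indicator_marginal_le [PartialOrder M] [IsOrderedAddMonoid M] (hv : v ∅ = 0)
    (hsub : IsSubmodular v) (A : Set Ω) : ∑ a, A.indicator (marginal v) a ≤ v A := by
  lift A to Finset Ω using A.toFinite
  rw [Finset.sum_indicator_subset _ A.subset_univ]
  exact sum_marginal_le hv hsub A

end Marginal

section Choquet

variable {Ω : Type*}

/-- The Choquet integral of a nonnegative function `Z` with respect to a set function `v`. The
distortion functional `ρ_g` is the case `v A = g (P A)`. Only the superlevel sets of `Z` at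
positive levels enter, so negative values of `Z` are treated as zero. -/
noncomputable def choquetIntegral (v : Set Ω → ℝ) (Z : Ω → ℝ) : ℝ :=
  ∫ z in Set.Ioi (0 : ℝ), v {ω | z < Z ω}

theorem integrableOn_Ioi_indicator_Iio {E : Type*} [NormedAddCommGroup E] (x y : ℝ) (c : E) :
    IntegrableOn ((Set.Iio y).indicator fun _ ↦ c) (Set.Ioi x) := by
  rw [IntegrableOn, integrable_indicator_iff measurableSet_Iio, IntegrableOn,
    Measure.restrict_restrict measurableSet_Iio, Set.Iio_inter_Ioi]
  exact integrableOn_const measure_Ioo_lt_top.ne enorm_ne_top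

theorem setIntegral_Ioi_indicator_Iio {E : Type*} [NormedAddCommGroup E] [NormedSpace ℝ E]
    [CompleteSpace E] {x y : ℝ} (hxy : x ≤ y) (c : E) :
    ∫ z in Set.Ioi x, (Set.Iio y).indicator (fun _ ↦ c) z = (y - x) • c := by
  rw [setIntegral_indicator measurableSet_Iio, Set.Ioi_inter_Iio, setIntegral_const,
    Real.volume_real_Ioo_of_le hxy]

theorem integrableOn_sum_indicator_superlevel [Fintype Ω] (w Z : Ω → ℝ) (x : ℝ) :
    IntegrableOn (fun z ↦ ∑ a, {ω | z < Z ω}.indicator w a) (Set.Ioi x) :=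
  integrable_finsetSum _ fun a _ ↦ integrableOn_Ioi_indicator_Iio x (Z a) (w a)

theorem choquetIntegral_sum_indicator [Fintype Ω] (w : Ω → ℝ) {Z : Ω → ℝ} (hZ : 0 ≤ Z) :
    choquetIntegral (fun A ↦ ∑ a, A.indicator w a) Z = ∑ a, Z a * w a := by
  calc choquetIntegral (fun A ↦ ∑ a, A.indicator w a) Z
      = ∑ a, ∫ z in Set.Ioi 0, (Set.Iio (Z a)).indicator (fun _ ↦ w a) z :=
        integral_finsetSum _ fun a _ ↦ integrableOn_Ioi_indicator_Iio 0 (Z a) (w a)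
    _ = ∑ a, Z a * w a := by
        simp only [setIntegral_Ioi_indicator_Iio (x := 0) (hZ _), sub_zero, smul_eq_mul]

variable [Finite Ω]

theorem integrableOn_superlevel {v : Set Ω → ℝ} (hv : v ∅ = 0) (Z : Ω → ℝ) (x : ℝ) :
    IntegrableOn (fun z ↦ v {ω | z < Z ω}) (Set.Ioi x) := by
  cases nonempty_fintype Ω
  obtain ⟨_, hZ⟩ := exists_linearOrder_antitone Z
  simp only [← sum_indicator_marginal_superlevel hv hZ]
  exact integrableOn_sum_indicator_superlevel _ Z x

theorem choquetIntegral_mono_left {u v : Set Ω → ℝ} (hu : u ∅ = 0) (hv : v ∅ = 0) (huv : u ≤ v)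
    (Z : Ω → ℝ) : choquetIntegral u Z ≤ choquetIntegral v Z :=
  integral_mono (integrableOn_superlevel hu Z 0) (integrableOn_superlevel hv Z 0) fun _ ↦ huv _

theorem choquetIntegral_add_le_of_isSubmodular {v : Set Ω → ℝ} (hv : v ∅ = 0)
    (hsub : IsSubmodular v) {Z₁ Z₂ : Ω → ℝ} (hZ₁ : 0 ≤ Z₁) (hZ₂ : 0 ≤ Z₂) :
    choquetIntegral v (Z₁ + Z₂) ≤ choquetIntegral v Z₁ + choquetIntegral v Z₂ := by
  cases nonempty_fintype Ω
  obtain ⟨_, hanti⟩ := exists_linearOrder_antitone (Z₁ + Z₂)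
  let u : Set Ω → ℝ := fun A ↦ ∑ a, A.indicator (marginal v) a
  have hu : u ∅ = 0 := by simp [u]
  have huv : u ≤ v := sum_indicator_marginal_le hv hsub
  calc choquetIntegral v (Z₁ + Z₂)
      = choquetIntegral u (Z₁ + Z₂) := by
        simp only [choquetIntegral, u, sum_indicator_marginal_superlevel hv hanti]
    _ = choquetIntegral u Z₁ + choquetIntegral u Z₂ := by
        simp only [u, choquetIntegral_sum_indicator _ hZ₁, choquetIntegral_sum_indicator _ hZ₂,
          choquetIntegral_sum_indicator _ (add_nonneg hZ₁ hZ₂), Pi.add_apply, add_mul,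
          Finset.sum_add_distrib]
    _ ≤ choquetIntegral v Z₁ + choquetIntegral v Z₂ :=
        add_le_add (choquetIntegral_mono_left hu hv huv Z₁)
          (choquetIntegral_mono_left hu hv huv Z₂)

end Choquet

theorem distortion_risk_measure_subadditive_general
    {Ω : Type*} [Finite Ω] [MeasurableSpace Ω] [MeasurableSingletonClass Ω]
    (P : Measure Ω) [IsFiniteMeasure P] {g : ℝ → ℝ} (hg0 : g 0 = 0)
    (hgconc : ConcaveOn ℝ (Set.Icc 0 (P.real Set.univ)) g)
    {Z₁ Z₂ : Ω → ℝ} (hZ₁ : 0 ≤ Z₁) (hZ₂ : 0 ≤ Z₂) :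
    ∫ z in Set.Ioi (0 : ℝ), g (P.real {ω | z < Z₁ ω + Z₂ ω}) ≤
      (∫ z in Set.Ioi (0 : ℝ), g (P.real {ω | z < Z₁ ω})) +
        ∫ z in Set.Ioi (0 : ℝ), g (P.real {ω | z < Z₂ ω}) :=
  choquetIntegral_add_le_of_isSubmodular (by simp [hg0])
    (isSubmodular_comp_measureReal P hgconc) hZ₁ hZ₂

/-- On a finite probability space, a distortion risk measure with a
nondecreasing concave distortion function `g : [0,1] → [0,1]`, `g(0) = 0`, is
subadditive: `ρ_g(Z₁ + Z₂) ≤ ρ_g(Z₁) + ρ_g(Z₂)`. -/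
theorem distortion_risk_measure_subadditive
    {Ω : Type*} [Fintype Ω] [MeasurableSpace Ω] [MeasurableSingletonClass Ω]
    (P : Measure Ω) [IsProbabilityMeasure P]
    (g : ℝ → ℝ) (hg0 : g 0 = 0)
    (hgmono : MonotoneOn g (Set.Icc 0 1))
    (hgconc : ConcaveOn ℝ (Set.Icc 0 1) g)
    (hgmap : ∀ s ∈ Set.Icc (0 : ℝ) 1, g s ∈ Set.Icc (0 : ℝ) 1)
    (Z₁ Z₂ : Ω → ℝ) (hZ₁0 : ∀ ω, 0 ≤ Z₁ ω) (hZ₂0 : ∀ ω, 0 ≤ Z₂ ω) :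
    ∫ z in Set.Ioi (0 : ℝ), g ((P {ω | z < Z₁ ω + Z₂ ω}).toReal) ≤
      (∫ z in Set.Ioi (0 : ℝ), g ((P {ω | z < Z₁ ω}).toReal)) +
        ∫ z in Set.Ioi (0 : ℝ), g ((P {ω | z < Z₂ ω}).toReal) := by
  exact distortion_risk_measure_subadditive_general P hg0 (by simpa using hgconc) hZ₁0 hZ₂0
end
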